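/- Fix an integer g ≥ 0 and integers r̂, ŝ ≥ 0. Assume the string equation hypothesis holds for F_0, …, F_g. If Ψ_{r̂,ŝ,g,m}(W_1, …, W_{r̂} | V_1, …, V_{ŝ}) = 0 for all integers m ≥ 2g − 3 + r̂ + ŝ and all coordinate entries W_i = τ_{p_i}(γ_{x_i}), V_j = τ_{q_j}(γ_{y_j}), then for all integers 0 ≤ r ≤ r̂ and 0 ≤ s ≤ ŝ, Ψ_{r,s,g,m}(W_1, …, W_r | V_1, …, V_s) = 0 for all integers m ≥ 2g − 3 + r + s and all coordinate entries W_i, V_j. -/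

import Mathlib

open scoped BigOperators

namespace GWBigPhase

/-- The big phase space coefficient ring: formal power series over `ℚ` in the
variables `t_n^α`, indexed by pairs `(n, α) : ℕ × Fin N`. -/
abbrev R (N : ℕ) : Type := MvPowerSeries (ℕ × Fin N) ℚ

/-- Partial derivative of a multivariate power series with respect to the
variable indexed by `i`. -/
noncomputable def pderiv (N : ℕ) (i : ℕ × Fin N) (f : R N) : R N :=
  fun e => ((e i : ℚ) + 1) * MvPowerSeries.coeff (R := ℚ) (e + Finsupp.single i 1) f

/-- Coefficientwise (formally convergent) sum of a family of power series. -/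
noncomputable def seriesSum (N : ℕ) (f : ℕ × Fin N → R N) : R N :=
  fun e => ∑ᶠ p : ℕ × Fin N, MvPowerSeries.coeff (R := ℚ) e (f p)

/-- The bracket `⟨⟨τ_{n_1}(γ_{α_1}) ⋯ τ_{n_k}(γ_{α_k})⟩⟩_h`: iterated partial
derivative of `F h`, and `0` whenever some descendent level is negative. -/
noncomputable def Bracket (N : ℕ) (F : ℕ → R N) (h : ℕ) : List (ℤ × Fin N) → R N
  | [] => F h
  | (n, α) :: L => if 0 ≤ n then pderiv N (n.toNat, α) (Bracket N F h L) else 0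

/-- `t̃_n^α = t_n^α − δ_{α,1} δ_{n,1}` (the distinguished index `1` is `0 : Fin N`). -/
noncomputable def ttilde (N : ℕ) [NeZero N] (n : ℕ) (α : Fin N) : R N :=
  MvPowerSeries.X (n, α) - if n = 1 ∧ α = 0 then 1 else 0

/-- Interpret a list of coordinate entries `τ_n(γ_α)` with `n : ℕ` as entries
with integer descendent levels. -/
def coordList (N : ℕ) (L : List (ℕ × Fin N)) : List (ℤ × Fin N) :=
  L.map (fun p => ((p.1 : ℤ), p.2))

/-- Lower the descendent level of the `i`-th entry of a list by one (the
operator `τ_-` applied in the `i`-th slot). -/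
def lowerAt (N : ℕ) (L : List (ℤ × Fin N)) (i : ℕ) : List (ℤ × Fin N) :=
  L.mapIdx (fun j p => if j = i then (p.1 - 1, p.2) else p)

/-- The quantity `Ψ_{r,s,g,m}(W_1 ⋯ W_r | V_1 ⋯ V_s)`, where `r = Ws.length`
and `s = Vs.length`. -/
noncomputable def Psi (N : ℕ) [NeZero N] (ηinv : Matrix (Fin N) (Fin N) ℚ)
    (F : ℕ → R N) (g m : ℕ) (Ws Vs : List (ℤ × Fin N)) : R N :=
  (∑ k ∈ Finset.range (m + 1), ∑ g1 ∈ Finset.range (g + 1),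
      ∑ α : Fin N, ∑ β : Fin N,
        (-1 : R N) ^ k * MvPowerSeries.C (σ := ℕ × Fin N) (R := ℚ) (ηinv α β) *
          Bracket N F g1 (((k : ℤ), α) :: Ws) *
          Bracket N F (g - g1) ((((m - k : ℕ) : ℤ), β) :: Vs))
  - (match Ws with
     | [] => seriesSum N (fun p =>
         ttilde N p.1 p.2 * Bracket N F g (((p.1 : ℤ) + (m : ℤ) + 1, p.2) :: Vs))
     | [w] => Bracket N F g ((w.1 + (m : ℤ) + 1, w.2) :: Vs)
     | _ => 0)
  + (-1 : R N) ^ (m + 1) *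
    (match Vs with
     | [] => seriesSum N (fun p =>
         ttilde N p.1 p.2 * Bracket N F g (((p.1 : ℤ) + (m : ℤ) + 1, p.2) :: Ws))
     | [v] => Bracket N F g (Ws ++ [(v.1 + (m : ℤ) + 1, v.2)])
     | _ => 0)

/-- `Ψ_{r+1,s,g,m}(W_1 ⋯ W_r S | V_1 ⋯ V_s)`: the value of `Ψ` with the string
vector field `S = −Σ_{n,α} t̃_n^α τ_{n−1}(γ_α)` inserted as the last `W`-entry,
expanded by `R`-multilinearity of `Ψ`. -/
noncomputable def PsiS (N : ℕ) [NeZero N] (ηinv : Matrix (Fin N) (Fin N) ℚ)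
    (F : ℕ → R N) (g m : ℕ) (Ws Vs : List (ℤ × Fin N)) : R N :=
  - seriesSum N (fun p =>
      ttilde N p.1 p.2 * Psi N ηinv F g m (Ws ++ [((p.1 : ℤ) - 1, p.2)]) Vs)

/-- The string equation hypothesis for `F_0, …, F_g`. -/
def StringEqHyp (N : ℕ) [NeZero N] (η : Matrix (Fin N) (Fin N) ℚ)
    (F : ℕ → R N) (g : ℕ) : Prop :=
  ∀ h : ℕ, h ≤ g →
    pderiv N ((0 : ℕ), (0 : Fin N)) (F h) =
      seriesSum N (fun p => MvPowerSeries.X (p.1 + 1, p.2) * pderiv N p (F h)) +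
      (if h = 0 then
        MvPowerSeries.C (σ := ℕ × Fin N) (R := ℚ) (1 / 2) *
          ∑ α : Fin N, ∑ β : Fin N,
            MvPowerSeries.C (σ := ℕ × Fin N) (R := ℚ) (η α β) *
              MvPowerSeries.X ((0 : ℕ), α) * MvPowerSeries.X ((0 : ℕ), β)
       else 0)

/-!
Extend the one-point functions to negative descendant levels by
`⟨⟨τ_{-1-n}(γ_α)⟩⟩_h = δ_{h,0} (-1)^n ∑ η_{αγ} t̃_n^γ`. The edge terms of `Ψ_m` are then the parts
`k < 0` and `k > m` of the single convolution
`Ψ_m(W | V) = ∑_{k ∈ ℤ} (-1)^k ∑_{g₁+g₂=g} η^{αβ} ⟨⟨τ_k(γ_α) W⟩⟩_{g₁} ⟨⟨τ_{m-k}(γ_β) V⟩⟩_{g₂}`,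
and the string equation says that the string vector field shifts every level, negative or not:
`S ⟨⟨τ_k(γ_α)⟩⟩ = ⟨⟨τ_{k-1}(γ_α)⟩⟩`. Differentiating along `W`, we obtain
`Ψ_{m+1}(W S | V) = -Ψ_m(W | V) + (terms Ψ_{m+1} in which τ_- is applied to an entry of W)`.
If `Ψ` vanishes with one more entry, so does the left side, and induction on the total level of `W`
yields `Ψ_m(W | V) = 0`. The reflection `k ↦ m - k` exchanges `W` and `V`.
-/

section Derivatives

variable {σ K : Type*} [CommSemiring K]

theorem mvPderiv_comm (i j : σ) (f : MvPowerSeries σ K) :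
    MvPowerSeries.pderiv K i (MvPowerSeries.pderiv K j f) =
      MvPowerSeries.pderiv K j (MvPowerSeries.pderiv K i f) := by
  rcases eq_or_ne i j with rfl | hij
  · rfl
  ext e
  simp only [MvPowerSeries.coeff_pderiv, Finsupp.add_apply, Finsupp.single_eq_of_ne hij,
    Finsupp.single_eq_of_ne hij.symm, add_zero, add_right_comm e, mul_right_comm]

variable (K) in
/-- The iterated partial derivative along a list of variables. -/
noncomputable def iterPderiv (L : List σ) : Module.End K (MvPowerSeries σ K) :=
  (L.map fun i => (MvPowerSeries.pderiv K i).toLinearMap).prod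

@[simp]
theorem iterPderiv_nil (f : MvPowerSeries σ K) : iterPderiv K [] f = f := rfl

theorem iterPderiv_cons (i : σ) (L : List σ) (f : MvPowerSeries σ K) :
    iterPderiv K (i :: L) f = MvPowerSeries.pderiv K i (iterPderiv K L f) := by
  simp [iterPderiv]

theorem iterPderiv_append_singleton (L : List σ) (i : σ) (f : MvPowerSeries σ K) :
    iterPderiv K (L ++ [i]) f = iterPderiv K (i :: L) f := by
  induction L with
  | nil => rfl
  | cons j L ih =>
    rw [List.cons_append, iterPderiv_cons, ih, iterPderiv_cons, mvPderiv_comm, iterPderiv_cons i,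
      iterPderiv_cons j]

theorem iterPderiv_pderiv (L : List σ) (i : σ) (f : MvPowerSeries σ K) :
    iterPderiv K L (MvPowerSeries.pderiv K i f) = iterPderiv K (i :: L) f := by
  rw [← iterPderiv_append_singleton]
  simp [iterPderiv]

theorem pderiv_eq {N : ℕ} (i : ℕ × Fin N) (f : R N) :
    pderiv N i f = MvPowerSeries.pderiv ℚ i f := by
  ext e
  rw [MvPowerSeries.coeff_pderiv, mul_comm]
  rfl

theorem bracket_coordList {N : ℕ} (F : ℕ → R N) (h : ℕ) (L : List (ℕ × Fin N)) :
    Bracket N F h (coordList N L) = iterPderiv ℚ L (F h) := by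
  induction L with
  | nil => rfl
  | cons i L ih =>
    rw [iterPderiv_cons, ← ih, ← pderiv_eq]
    simp [coordList, Bracket]

end Derivatives

section FormalConvergence

open Filter
open scoped MvPowerSeries.WithPiTopology

variable {σ K ι κ : Type*} [CommSemiring K] {l : Filter ι} {c : ι → MvPowerSeries σ K}

/-- Convergence of a family of power series to zero in the strongest coefficientwise sense: along
the filter `l`, each coefficient is eventually equal to zero. For `l = cofinite` this says that the
family is formally summable. -/
def CoeffsVanishAlong (l : Filter ι) (c : ι → MvPowerSeries σ K) : Prop :=
  ∀ e : σ →₀ ℕ, ∀ᶠ i in l, MvPowerSeries.coeff e (c i) = 0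

theorem coeffsVanishAlong_X :
    CoeffsVanishAlong cofinite fun i : σ => (MvPowerSeries.X i : MvPowerSeries σ K) := fun e => by
  classical
  filter_upwards [(Finsupp.single_left_injective one_ne_zero).tendsto_cofinite.eventually
    (Set.finite_singleton e).compl_mem_cofinite] with i hi
  rw [MvPowerSeries.coeff_X, if_neg (Ne.symm hi)]

theorem CoeffsVanishAlong.smul (a : ι → K) (hc : CoeffsVanishAlong l c) :
    CoeffsVanishAlong l fun i => a i • c i := fun e =>
  (hc e).mono fun i hi => by simp [hi]

theorem CoeffsVanishAlong.sum {s : Finset κ} {c : κ → ι → MvPowerSeries σ K}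
    (hc : ∀ j ∈ s, CoeffsVanishAlong l (c j)) :
    CoeffsVanishAlong l fun i => ∑ j ∈ s, c j i := fun e =>
  ((eventually_all_finset s).2 fun j hj => hc j hj e).mono fun i hi => by
    rw [map_sum, Finset.sum_eq_zero hi]

theorem CoeffsVanishAlong.mul_right (hc : CoeffsVanishAlong l c) (d : ι → MvPowerSeries σ K) :
    CoeffsVanishAlong l fun i => c i * d i := fun e => by
  classical
  have hfst := (eventually_all_finset (Finset.HasAntidiagonal.antidiagonal e)).2 fun x _ => hc x.1
  refine hfst.mono fun i hi => ?_
  rw [MvPowerSeries.coeff_mul]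
  exact Finset.sum_eq_zero fun x hx => by rw [hi x hx, zero_mul]

theorem CoeffsVanishAlong.comp_tendsto {l' : Filter κ} {φ : κ → ι} (hc : CoeffsVanishAlong l c)
    (hφ : Tendsto φ l' l) : CoeffsVanishAlong l' fun j => c (φ j) := fun e =>
  hφ.eventually (hc e)

theorem CoeffsVanishAlong.iterPderiv (hc : CoeffsVanishAlong l c) (L : List σ) :
    CoeffsVanishAlong l fun i => iterPderiv K L (c i) := by
  induction L with
  | nil => exact hc
  | cons j L ih =>
    intro e
    filter_upwards [ih (e + Finsupp.single j 1)] with i hi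
    rw [iterPderiv_cons, MvPowerSeries.coeff_pderiv, hi, zero_mul]

theorem CoeffsVanishAlong.mul_comp_sub {a b : ℤ → MvPowerSeries σ K}
    (ha : CoeffsVanishAlong atBot a) (hb : CoeffsVanishAlong atBot b) (m : ℤ) :
    CoeffsVanishAlong cofinite fun k => a k * b (m - k) := fun e => by
  have hsub : Tendsto (fun k : ℤ => m - k) atTop atBot :=
    tendsto_atBot_add_const_left _ m tendsto_neg_atTop_atBot
  rw [Int.cofinite_eq, eventually_sup]
  refine ⟨ha.mul_right _ e, ?_⟩
  simp only [mul_comm (a _)]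
  exact (hb.comp_tendsto hsub).mul_right _ e

variable [TopologicalSpace K]

theorem continuous_mvPderiv [IsTopologicalSemiring K] (i : σ) :
    Continuous (MvPowerSeries.pderiv K i : MvPowerSeries σ K → MvPowerSeries σ K) :=
  continuous_pi fun e => by
    change Continuous fun f => MvPowerSeries.coeff e (MvPowerSeries.pderiv K i f)
    simp only [MvPowerSeries.coeff_pderiv]
    exact (MvPowerSeries.WithPiTopology.continuous_coeff K _).mul continuous_const

theorem CoeffsVanishAlong.summable (hc : CoeffsVanishAlong cofinite c) : Summable c :=
  MvPowerSeries.WithPiTopology.summable_iff_summable_coeff.2 fun e =>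
    summable_of_hasFiniteSupport (hc e)

theorem CoeffsVanishAlong.continuous_tsum_mul [IsTopologicalSemiring K] [T2Space K]
    (hc : CoeffsVanishAlong cofinite c) :
    Continuous fun f : ι → MvPowerSeries σ K => ∑' i, c i * f i := by
  classical
  refine continuous_pi fun e => ?_
  have hfin := (eventually_all_finset (Finset.HasAntidiagonal.antidiagonal e)).2 fun x _ => hc x.1
  have hcoeff (f : ι → MvPowerSeries σ K) : MvPowerSeries.coeff e (∑' i, c i * f i) =
      ∑ i ∈ (eventually_cofinite.1 hfin).toFinset, MvPowerSeries.coeff e (c i * f i) := by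
    rw [(hc.mul_right f).summable.map_tsum (MvPowerSeries.coeff e)
      (MvPowerSeries.WithPiTopology.continuous_coeff K e)]
    refine tsum_eq_sum fun i hi => ?_
    rw [MvPowerSeries.coeff_mul]
    rw [Set.Finite.mem_toFinset, Set.mem_ofPred_eq, not_not] at hi
    exact Finset.sum_eq_zero fun x hx => by rw [hi x hx, zero_mul]
  change Continuous fun f : ι → MvPowerSeries σ K => MvPowerSeries.coeff e (∑' i, c i * f i)
  simp only [hcoeff]
  exact continuous_finsetSum _ fun i _ => (MvPowerSeries.WithPiTopology.continuous_coeff K e).comp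
    (continuous_const.mul (continuous_apply i))

theorem CoeffsVanishAlong.seriesSum_eq_tsum {N : ℕ} {f : ℕ × Fin N → R N}
    (hf : CoeffsVanishAlong cofinite f) : seriesSum N f = ∑' p, f p := by
  ext e
  rw [hf.summable.map_tsum (MvPowerSeries.coeff e)
    (MvPowerSeries.WithPiTopology.continuous_coeff ℚ e)]
  exact (tsum_eq_finsum (hf e)).symm

end FormalConvergence

section StringField

open Filter
open scoped MvPowerSeries.WithPiTopology

variable {N : ℕ}

theorem tendsto_raise_cofinite :
    Tendsto (fun p : ℕ × Fin N => (p.1 + 1, p.2)) cofinite cofinite :=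
  Function.Injective.tendsto_cofinite fun p q h => by simpa [Prod.ext_iff] using h

/-- Evaluation at the entry obtained by lowering the level of `q` by one, or `0` if that level is
negative. -/
noncomputable def evalLowered : ℕ × Fin N → (ℕ × Fin N → R N) →ₗ[R N] R N
  | (0, _) => 0
  | (n + 1, α) => LinearMap.proj (n, α)

theorem pderiv_evalLowered (i q : ℕ × Fin N) (f : ℕ × Fin N → R N) :
    MvPowerSeries.pderiv ℚ i (evalLowered q f) =
      evalLowered q fun p => MvPowerSeries.pderiv ℚ i (f p) := by
  obtain ⟨_ | n, α⟩ := q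
  · exact map_zero _
  · rfl

theorem continuous_evalLowered (q : ℕ × Fin N) : Continuous (evalLowered q) := by
  obtain ⟨_ | n, α⟩ := q
  · exact continuous_const
  · exact continuous_apply _

variable [NeZero N]

theorem pderiv_ttilde (q p : ℕ × Fin N) :
    MvPowerSeries.pderiv ℚ q (ttilde N p.1 p.2) = if p = q then 1 else 0 := by
  have hconst : MvPowerSeries.pderiv ℚ q (if p.1 = 1 ∧ p.2 = 0 then 1 else 0 : R N) = 0 := by
    split_ifs <;> simp
  rw [ttilde, map_sub, hconst, sub_zero]
  split_ifs with h
  · rw [h, MvPowerSeries.pderiv_X_self]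
  · exact MvPowerSeries.pderiv_X_of_ne h

theorem coeffsVanishAlong_ttilde :
    CoeffsVanishAlong cofinite fun p : ℕ × Fin N => ttilde N p.1 p.2 := fun e => by
  filter_upwards [coeffsVanishAlong_X (K := ℚ) e, (Set.finite_singleton (1, 0)).compl_mem_cofinite]
    with p hX hp
  have hp' : ¬(p.1 = 1 ∧ p.2 = 0) := fun h => hp (Prod.ext h.1 h.2)
  rwa [ttilde, if_neg hp', sub_zero]

theorem coeffsVanishAlong_ttilde_succ :
    CoeffsVanishAlong cofinite fun p : ℕ × Fin N => ttilde N (p.1 + 1) p.2 := fun e =>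
  tendsto_raise_cofinite.eventually (coeffsVanishAlong_ttilde e)

variable (N) in
/-- The functional `f ↦ ∑ t̃_{n+1}^α f_{n,α}`, which is the string vector field up to the sign and
the entries of negative level. -/
noncomputable def stringSum : (ℕ × Fin N → R N) →ₗ[R N] R N where
  toFun f := ∑' p, ttilde N (p.1 + 1) p.2 * f p
  map_add' f f' := by
    simp only [Pi.add_apply, mul_add]
    exact (coeffsVanishAlong_ttilde_succ.mul_right f).summable.tsum_add
      (coeffsVanishAlong_ttilde_succ.mul_right f').summable
  map_smul' a f := by
    simp only [Pi.smul_apply, smul_eq_mul, mul_left_comm _ a, RingHom.id_apply]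
    exact (coeffsVanishAlong_ttilde_succ.mul_right f).summable.tsum_mul_left a

theorem stringSum_apply (f : ℕ × Fin N → R N) :
    stringSum N f = ∑' p, ttilde N (p.1 + 1) p.2 * f p := rfl

theorem continuous_stringSum : Continuous (stringSum N) :=
  coeffsVanishAlong_ttilde_succ.continuous_tsum_mul

theorem pderiv_stringSum (q : ℕ × Fin N) (f : ℕ × Fin N → R N) :
    MvPowerSeries.pderiv ℚ q (stringSum N f) =
      stringSum N (fun p => MvPowerSeries.pderiv ℚ q (f p)) + evalLowered q f := by
  have hdiag :
      HasSum (fun p : ℕ × Fin N => if (p.1 + 1, p.2) = q then f p else 0) (evalLowered q f) := by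
    obtain ⟨_ | n, α⟩ := q
    · simp [evalLowered, hasSum_zero]
    · have hsingle := hasSum_single (f := fun p : ℕ × Fin N =>
        if (p.1 + 1, p.2) = (n + 1, α) then f p else 0) (n, α)
        fun p hp => if_neg fun h => hp (by simpa [Prod.ext_iff] using h)
      rwa [if_pos rfl] at hsingle
  have hsummable := (coeffsVanishAlong_ttilde_succ (N := N)).mul_right f
  have hsummable' := (coeffsVanishAlong_ttilde_succ (N := N)).mul_right
    fun p => MvPowerSeries.pderiv ℚ q (f p)
  have hlocal (p : ℕ × Fin N) : MvPowerSeries.pderiv ℚ q (ttilde N (p.1 + 1) p.2 * f p) =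
      ttilde N (p.1 + 1) p.2 * MvPowerSeries.pderiv ℚ q (f p) +
        if (p.1 + 1, p.2) = q then f p else 0 := by
    simp [Derivation.leibniz, pderiv_ttilde q (p.1 + 1, p.2)]
  rw [stringSum_apply, hsummable.summable.map_tsum _ (continuous_mvPderiv q)]
  simp only [hlocal]
  rw [hsummable'.summable.tsum_add hdiag.summable, hdiag.tsum_eq, stringSum_apply]

variable (N) in
/-- The derivation `f ↦ ∑ t̃_{n+1}^α ∂f/∂t_n^α`, which is the action of `-S` on functions. -/
noncomputable def stringField : R N →ₗ[ℚ] R N :=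
  (stringSum N).restrictScalars ℚ ∘ₗ LinearMap.pi fun p => (MvPowerSeries.pderiv ℚ p).toLinearMap

theorem stringField_apply (f : R N) :
    stringField N f = stringSum N fun p => MvPowerSeries.pderiv ℚ p f := rfl

theorem pderiv_stringField (q : ℕ × Fin N) (f : R N) :
    MvPowerSeries.pderiv ℚ q (stringField N f) =
      stringField N (MvPowerSeries.pderiv ℚ q f) +
        evalLowered q fun p => MvPowerSeries.pderiv ℚ p f := by
  simp only [stringField_apply, pderiv_stringSum, mvPderiv_comm q]

/-- If `Φ` is a multilinear bracket, `insertString W Φ` is the value `-Φ(W, S)` of the bracket with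
the string vector field `S` as an additional entry, plus the sum of the brackets in which `τ_-` is
applied to one of the entries in `W`. -/
noncomputable def insertString :
    List (ℕ × Fin N) → (List (ℕ × Fin N) → R N) →ₗ[R N] R N
  | [] => (stringSum N).comp (LinearMap.funLeft (R N) (R N) fun p => [p])
  | q :: W => (insertString W).comp (LinearMap.funLeft (R N) (R N) (q :: ·)) +
      (evalLowered q).comp (LinearMap.funLeft (R N) (R N) (· :: W))

theorem insertString_nil (Φ : List (ℕ × Fin N) → R N) :
    insertString [] Φ = stringSum N fun p => Φ [p] := rfl

theorem insertString_cons (q : ℕ × Fin N) (W : List (ℕ × Fin N)) (Φ : List (ℕ × Fin N) → R N) :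
    insertString (q :: W) Φ =
      insertString W (fun L => Φ (q :: L)) + evalLowered q fun v => Φ (v :: W) := rfl

theorem continuous_insertString (W : List (ℕ × Fin N)) : Continuous (insertString W) := by
  induction W with
  | nil => exact continuous_stringSum.comp (continuous_pi fun p => continuous_apply [p])
  | cons q W ih =>
    exact (ih.comp (continuous_pi fun L => continuous_apply (q :: L))).add
      ((continuous_evalLowered q).comp (continuous_pi fun v => continuous_apply (v :: W)))

theorem pderiv_insertString (q : ℕ × Fin N) (W : List (ℕ × Fin N))
    (Φ : List (ℕ × Fin N) → R N) :
    MvPowerSeries.pderiv ℚ q (insertString W Φ) =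
      insertString W (fun L => MvPowerSeries.pderiv ℚ q (Φ L)) +
        evalLowered q fun v => Φ (W ++ [v]) := by
  induction W generalizing Φ with
  | nil => exact pderiv_stringSum q _
  | cons w W ih =>
    simp only [insertString_cons, map_add, ih, pderiv_evalLowered, List.cons_append]
    abel

theorem iterPderiv_stringField (W : List (ℕ × Fin N)) (f : R N) :
    iterPderiv ℚ W (stringField N f) = insertString W fun L => iterPderiv ℚ L f := by
  induction W with
  | nil => rfl
  | cons q W ih =>
    rw [iterPderiv_cons, ih, pderiv_insertString, insertString_cons]
    simp only [iterPderiv_cons q, iterPderiv_append_singleton]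

theorem insertString_tsum {κ : Type*} (W : List (ℕ × Fin N)) {T : List (ℕ × Fin N) → κ → R N}
    (hT : ∀ L, Summable (T L)) :
    insertString W (fun L => ∑' k, T L k) = ∑' k, insertString W fun L => T L k := by
  have hsummable : Summable fun k L => T L k := Pi.summable.2 hT
  rw [← hsummable.map_tsum (insertString W) (continuous_insertString W)]
  congr 1
  funext L
  exact (tsum_apply hsummable).symm

theorem insertString_eq_zero (W : List (ℕ × Fin N)) {Φ : List (ℕ × Fin N) → R N}
    (hsucc : ∀ L, L.length = W.length + 1 → Φ L = 0)
    (hlower : ∀ L, L.length = W.length → (L.map Prod.fst).sum < (W.map Prod.fst).sum → Φ L = 0) :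
    insertString W Φ = 0 := by
  induction W generalizing Φ with
  | nil =>
    simp only [insertString_nil, hsucc _ (List.length_singleton)]
    exact map_zero _
  | cons q W ih =>
    rw [insertString_cons, ih (fun L hL => hsucc _ (by simp [hL]))
      fun L hL hlt => hlower _ (by simp [hL]) (by simpa using hlt), zero_add]
    obtain ⟨_ | n, α⟩ := q
    · rfl
    · exact hlower _ rfl (by simp)

end StringField

section StringEquation

open Filter
open scoped MvPowerSeries.WithPiTopology

variable {N : ℕ}

/-- The genus zero term `½ ∑ η_{αβ} t_0^α t_0^β` of the string equation. -/
noncomputable def stringTerm (η : Matrix (Fin N) (Fin N) ℚ) : R N :=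
  MvPowerSeries.C (σ := ℕ × Fin N) (R := ℚ) (1 / 2) *
    ∑ α : Fin N, ∑ β : Fin N, MvPowerSeries.C (σ := ℕ × Fin N) (R := ℚ) (η α β) *
      MvPowerSeries.X ((0 : ℕ), α) * MvPowerSeries.X ((0 : ℕ), β)

theorem stringTerm_eq_smul (η : Matrix (Fin N) (Fin N) ℚ) :
    stringTerm η = (1 / 2 : ℚ) • ∑ α : Fin N, ∑ β : Fin N,
      η α β • (MvPowerSeries.X ((0 : ℕ), α) * MvPowerSeries.X ((0 : ℕ), β) : R N) := by
  simp only [stringTerm, ← MvPowerSeries.smul_eq_C_mul, smul_mul_assoc]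

theorem pderiv_succ_stringTerm (η : Matrix (Fin N) (Fin N) ℚ) (n : ℕ) (α : Fin N) :
    MvPowerSeries.pderiv ℚ (n + 1, α) (stringTerm η) = 0 := by
  simp [stringTerm_eq_smul, Derivation.leibniz]

variable [NeZero N] {η : Matrix (Fin N) (Fin N) ℚ} {F : ℕ → R N} {g : ℕ}

theorem pderiv_zero_stringTerm (hη : ∀ α β, η α β = η β α) (α : Fin N) :
    MvPowerSeries.pderiv ℚ (0, α) (stringTerm η) = ∑ β, η α β • ttilde N 0 β := by
  have hX (β : Fin N) : MvPowerSeries.pderiv ℚ (0, α) (MvPowerSeries.X ((0 : ℕ), β) : R N) =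
      if β = α then 1 else 0 := by
    split_ifs with h
    · simp [h]
    · exact MvPowerSeries.pderiv_X_of_ne (by simpa using h)
  have htt (β : Fin N) : ttilde N 0 β = MvPowerSeries.X (0, β) := by simp [ttilde]
  rw [stringTerm_eq_smul, Derivation.map_smul]
  simp only [map_sum, Derivation.map_smul, Derivation.leibniz, hX, htt, smul_eq_mul, mul_ite,
    mul_one, mul_zero, smul_add, smul_ite, smul_zero, Finset.sum_add_distrib, Finset.sum_ite_irrel,
    Finset.sum_const_zero, Finset.sum_ite_eq', Finset.mem_univ, if_true, hη _ α]
  rw [← smul_add, ← two_smul ℚ, smul_smul]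
  norm_num

theorem stringSum_eq_seriesSum_sub (f : ℕ × Fin N → R N) :
    stringSum N f = seriesSum N (fun p => MvPowerSeries.X (p.1 + 1, p.2) * f p) - f (0, 0) := by
  have hX : CoeffsVanishAlong cofinite
      fun p : ℕ × Fin N => (MvPowerSeries.X (p.1 + 1, p.2) : R N) := fun e =>
    tendsto_raise_cofinite.eventually (coeffsVanishAlong_X e)
  have hsingle : HasSum (fun p : ℕ × Fin N => if p = (0, 0) then f p else 0) (f (0, 0)) := by
    simpa using hasSum_single (f := fun p : ℕ × Fin N => if p = (0, 0) then f p else 0) (0, 0)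
      fun p hp => if_neg hp
  have hlocal (p : ℕ × Fin N) : ttilde N (p.1 + 1) p.2 * f p =
      MvPowerSeries.X (p.1 + 1, p.2) * f p - if p = (0, 0) then f p else 0 := by
    rw [ttilde, sub_mul]
    simp [Prod.ext_iff]
  rw [(hX.mul_right f).seriesSum_eq_tsum, stringSum_apply, ← hsingle.tsum_eq,
    ← (hX.mul_right f).summable.tsum_sub hsingle.summable]
  exact tsum_congr hlocal

theorem StringEqHyp.stringField_eq (hF : StringEqHyp N η F g) {h : ℕ} (hh : h ≤ g) :
    stringField N (F h) = -if h = 0 then stringTerm η else 0 := by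
  have heq := hF h hh
  simp only [pderiv_eq] at heq
  rw [stringField_apply, stringSum_eq_seriesSum_sub, heq, stringTerm, sub_add_cancel_left]

theorem stringField_ttilde (n : ℕ) (γ : Fin N) :
    stringField N (ttilde N n γ) = ttilde N (n + 1) γ := by
  rw [stringField_apply, stringSum_apply, tsum_eq_single (n, γ)]
  · simp [pderiv_ttilde (n, γ) (n, γ)]
  · intro p hp
    rw [pderiv_ttilde p (n, γ), if_neg hp.symm, mul_zero]

variable (η F) in
/-- The one-point function `⟨⟨τ_k(γ_α)⟩⟩_h`, extended to negative `k` by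
`⟨⟨τ_{-1-n}(γ_α)⟩⟩_h = δ_{h,0} (-1)^n ∑ η_{αγ} t̃_n^γ`. -/
noncomputable def onePoint (h : ℕ) : ℤ → Fin N → R N
  | .ofNat n, α => MvPowerSeries.pderiv ℚ (n, α) (F h)
  | .negSucc n, α => if h = 0 then (-1 : ℚ) ^ n • ∑ γ, η α γ • ttilde N n γ else 0

theorem onePoint_natCast (h n : ℕ) (α : Fin N) :
    onePoint η F h n α = MvPowerSeries.pderiv ℚ (n, α) (F h) := rfl

theorem onePoint_negSucc (h n : ℕ) (α : Fin N) :
    onePoint η F h (Int.negSucc n) α =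
      if h = 0 then (-1 : ℚ) ^ n • ∑ γ, η α γ • ttilde N n γ else 0 := rfl

theorem StringEqHyp.stringField_onePoint (hF : StringEqHyp N η F g) (hη : ∀ α β, η α β = η β α)
    {h : ℕ} (hh : h ≤ g) (k : ℤ) (α : Fin N) :
    stringField N (onePoint η F h k α) = -onePoint η F h (k - 1) α := by
  have hpderiv (n : ℕ) : stringField N (MvPowerSeries.pderiv ℚ (n, α) (F h)) =
      -MvPowerSeries.pderiv ℚ (n, α) (if h = 0 then stringTerm η else 0) -
        evalLowered (n, α) fun p => MvPowerSeries.pderiv ℚ p (F h) := by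
    rw [eq_sub_iff_add_eq, ← pderiv_stringField, hF.stringField_eq hh, map_neg]
  obtain (_ | n) | n := k
  · change _ = -onePoint η F h (Int.negSucc 0) α
    rw [Int.ofNat_eq_natCast, onePoint_natCast, onePoint_negSucc, hpderiv]
    split_ifs <;> simp [evalLowered, pderiv_zero_stringTerm hη]
  · rw [Int.ofNat_eq_natCast, Nat.cast_succ, add_sub_cancel_right, ← Nat.cast_succ,
      onePoint_natCast, onePoint_natCast, hpderiv]
    split_ifs <;> simp [evalLowered, pderiv_succ_stringTerm]
  · change _ = -onePoint η F h (Int.negSucc (n + 1)) α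
    rw [onePoint_negSucc, onePoint_negSucc]
    split_ifs
    · simp only [map_smul, map_sum, stringField_ttilde, pow_succ, mul_neg_one, neg_smul, neg_neg]
    · simp

theorem coeffsVanishAlong_onePoint (h : ℕ) (α : Fin N) :
    CoeffsVanishAlong atBot fun k => onePoint η F h k α := fun e => by
  have htt : ∀ᶠ n : ℕ in atTop, ∀ γ : Fin N, MvPowerSeries.coeff e (ttilde N n γ) = 0 := by
    rw [← Nat.cofinite_eq_atTop, eventually_all]
    exact fun γ => (Prod.mk_left_injective γ).tendsto_cofinite.eventually
      (coeffsVanishAlong_ttilde e)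
  obtain ⟨n₀, hn₀⟩ := eventually_atTop.1 htt
  filter_upwards [eventually_le_atBot (Int.negSucc n₀)] with k hk
  obtain ⟨n, rfl⟩ := Int.eq_negSucc_of_lt_zero (hk.trans_lt (Int.negSucc_lt_zero n₀))
  have hn := hn₀ n (by omega)
  rw [onePoint]
  split_ifs <;> simp [hn]

end StringEquation

theorem tsum_int_eq_sum_range_add {G : Type*} [AddCommGroup G] [TopologicalSpace G]
    [IsTopologicalAddGroup G] [T2Space G] {f : ℤ → G} (hnat : Summable fun n : ℕ => f n)
    (hneg : Summable fun n : ℕ => f (Int.negSucc n)) (m : ℕ) :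
    ∑' k, f k =
      ∑ k ∈ Finset.range m, f k + ∑' n : ℕ, f (m + n) + ∑' n : ℕ, f (Int.negSucc n) := by
  simp only [Int.negSucc_eq] at hneg ⊢
  rw [tsum_of_nat_of_neg_add_one hnat hneg, ← hnat.sum_add_tsum_nat_add m]
  simp only [Nat.cast_add, add_comm (m : ℤ)]

section Pairing

open Filter
open Finset.HasAntidiagonal (antidiagonal)
open scoped MvPowerSeries.WithPiTopology

variable {N : ℕ} (ηinv : Matrix (Fin N) (Fin N) ℚ) (g : ℕ) (m : ℤ)

/-- The `k`-th term `(-1)^k ∑_{g₁+g₂=g} η^{αβ} A_{g₁}(τ_k(γ_α)) B_{g₂}(τ_{m-k}(γ_β))` of the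
pairing. -/
noncomputable def pairingTerm (A B : ℕ → ℤ → Fin N → R N) (k : ℤ) : R N :=
  ∑ x ∈ antidiagonal g, ∑ α, ∑ β,
    ((-1 : ℚ) ^ k * ηinv α β) • (A x.1 k α * B x.2 (m - k) β)

/-- The convolution `∑_{k ∈ ℤ} (-1)^k ∑_{g₁+g₂=g} η^{αβ} A_{g₁}(τ_k(γ_α)) B_{g₂}(τ_{m-k}(γ_β))` of
two families of power series which depend on a genus and on an entry of arbitrary integer level. -/
noncomputable def pairing (A B : ℕ → ℤ → Fin N → R N) : R N :=
  ∑' k, pairingTerm ηinv g m A B k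

theorem map_pairingTerm {κ : Type*} (ℓ : (κ → R N) →ₗ[R N] R N) (A : κ → ℕ → ℤ → Fin N → R N)
    (B : ℕ → ℤ → Fin N → R N) (k : ℤ) :
    ℓ (fun i => pairingTerm ηinv g m (A i) B k) =
      pairingTerm ηinv g m (fun h k α => ℓ fun i => A i h k α) B k := by
  have hfun : (fun i => pairingTerm ηinv g m (A i) B k) =
      ∑ x ∈ antidiagonal g, ∑ α, ∑ β,
        (((-1 : ℚ) ^ k * ηinv α β) • B x.2 (m - k) β) • fun i => A i x.1 k α := by
    funext i
    simp [pairingTerm, Finset.sum_apply, mul_comm (A i _ _ _)]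
  rw [hfun]
  simp [pairingTerm, mul_comm (ℓ _)]

theorem coeffsVanishAlong_pairingTerm {A B : ℕ → ℤ → Fin N → R N}
    (hA : ∀ h α, CoeffsVanishAlong atBot fun k => A h k α)
    (hB : ∀ h α, CoeffsVanishAlong atBot fun k => B h k α) :
    CoeffsVanishAlong cofinite (pairingTerm ηinv g m A B) :=
  .sum fun x _ => .sum fun α _ => .sum fun β _ => ((hA x.1 α).mul_comp_sub (hB x.2 β) m).smul _

variable {g}

theorem pairing_congr_left {A A' : ℕ → ℤ → Fin N → R N} (B : ℕ → ℤ → Fin N → R N)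
    (h : ∀ h ≤ g, A h = A' h) : pairing ηinv g m A B = pairing ηinv g m A' B := by
  refine tsum_congr fun k => Finset.sum_congr rfl fun x hx => ?_
  rw [h x.1 (by have := Finset.HasAntidiagonal.mem_antidiagonal.1 hx; omega)]

variable (g)

theorem pairing_shift (A B : ℕ → ℤ → Fin N → R N) :
    pairing ηinv g (m + 1) (fun h k α => -A h (k - 1) α) B = pairing ηinv g m A B := by
  rw [pairing, ← (Equiv.addRight (1 : ℤ)).tsum_eq]
  refine tsum_congr fun k => ?_
  simp only [pairingTerm, Equiv.coe_addRight, add_sub_cancel_right, add_sub_add_right_eq_sub,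
    zpow_add_one₀ (neg_ne_zero.2 (one_ne_zero (α := ℚ)))]
  simp

variable {ηinv}

theorem pairingTerm_reflect (hηinv : ∀ α β, ηinv α β = ηinv β α) (A B : ℕ → ℤ → Fin N → R N)
    (k : ℤ) :
    pairingTerm ηinv g m A B (m - k) = (-1 : ℚ) ^ m • pairingTerm ηinv g m B A k := by
  have hsign : (-1 : ℚ) ^ (m - k) = (-1) ^ m * (-1) ^ k := by
    rw [zpow_sub₀ (by norm_num), div_eq_mul_inv, ← inv_zpow, inv_neg_one]
  simp only [pairingTerm, Finset.smul_sum]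
  rw [← Finset.Nat.sum_antidiagonal_swap]
  refine Finset.sum_congr rfl fun x _ => ?_
  rw [Finset.sum_comm]
  simp only [sub_sub_cancel, hsign, hηinv, smul_smul, mul_assoc, Prod.fst_swap, Prod.snd_swap,
    mul_comm (A _ _ _)]

theorem pairing_symm (hηinv : ∀ α β, ηinv α β = ηinv β α) (A B : ℕ → ℤ → Fin N → R N) :
    pairing ηinv g m A B = (-1 : ℚ) ^ m • pairing ηinv g m B A := by
  rw [pairing, ← (Equiv.subLeft m).tsum_eq]
  simp only [Equiv.subLeft_apply, pairingTerm_reflect g m hηinv]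
  exact tsum_const_smul'' _

end Pairing

section SymmetricInverse

variable {ι K : Type*} [Fintype ι] [DecidableEq ι] [CommRing K] {η ηinv : Matrix ι ι K}

theorem inverse_symm (hη : ∀ α β, η α β = η β α) (hinv : η * ηinv = 1) (α β : ι) :
    ηinv α β = ηinv β α := by
  have hsymm : η⁻¹.IsSymm := (Matrix.IsSymm.ext fun α β => hη β α).inv
  rw [Matrix.inv_eq_right_inv hinv] at hsymm
  exact hsymm.apply β α

theorem sum_contract {M : Type*} [CommSemiring M] [Algebra K M] (hη : ∀ α β, η α β = η β α)
    (hinv : η * ηinv = 1) (x y : ι → M) :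
    ∑ α, ∑ β, ηinv α β • ((∑ γ, η α γ • x γ) * y β) = ∑ β, x β * y β := by
  have hδ (β γ : ι) : ∑ α, ηinv α β * η α γ = if γ = β then 1 else 0 := by
    rw [← Matrix.one_apply, ← hinv, Matrix.mul_apply]
    exact Finset.sum_congr rfl fun α _ => by rw [mul_comm, hη]
  simp only [Finset.sum_mul, smul_mul_assoc, Finset.smul_sum, smul_smul]
  rw [Finset.sum_comm]
  refine Finset.sum_congr rfl fun β _ => ?_
  rw [Finset.sum_comm]
  simp [← Finset.sum_smul, hδ]

end SymmetricInverse

section PsiAsPairing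

open Filter
open Finset.HasAntidiagonal (antidiagonal)
open scoped MvPowerSeries.WithPiTopology

variable {N : ℕ} [NeZero N] {η ηinv : Matrix (Fin N) (Fin N) ℚ} {F : ℕ → R N} {g m : ℕ}

variable (η F) in
/-- The bracket `⟨⟨τ_k(γ_α) W⟩⟩_h` for an arbitrary integer `k`, extended to negative `k` as the
derivative of `onePoint`. -/
noncomputable def correlator (W : List (ℕ × Fin N)) (h : ℕ) (k : ℤ) (α : Fin N) : R N :=
  iterPderiv ℚ W (onePoint η F h k α)

theorem correlator_natCast (W : List (ℕ × Fin N)) (h n : ℕ) (α : Fin N) :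
    correlator η F W h n α = iterPderiv ℚ ((n, α) :: W) (F h) :=
  iterPderiv_pderiv W (n, α) (F h)

theorem correlator_negSucc (W : List (ℕ × Fin N)) (h n : ℕ) (α : Fin N) :
    correlator η F W h (Int.negSucc n) α =
      if h = 0 then (-1 : ℚ) ^ n • ∑ γ, η α γ • iterPderiv ℚ W (ttilde N n γ) else 0 := by
  rw [correlator, onePoint_negSucc]
  split_ifs <;> simp

theorem coeffsVanishAlong_correlator (W : List (ℕ × Fin N)) (h : ℕ) (α : Fin N) :
    CoeffsVanishAlong atBot fun k => correlator η F W h k α :=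
  (coeffsVanishAlong_onePoint h α).iterPderiv W

theorem coeffsVanishAlong_pairingTerm_correlator (m : ℤ) (W V : List (ℕ × Fin N)) :
    CoeffsVanishAlong cofinite
      (pairingTerm ηinv g m (correlator η F W) (correlator η F V)) :=
  coeffsVanishAlong_pairingTerm ηinv g m (coeffsVanishAlong_correlator W)
    (coeffsVanishAlong_correlator V)

theorem StringEqHyp.insertString_correlator (hF : StringEqHyp N η F g)
    (hη : ∀ α β, η α β = η β α) {h : ℕ} (hh : h ≤ g) (W : List (ℕ × Fin N)) (k : ℤ) (α : Fin N) :
    insertString W (fun L => correlator η F L h k α) = -correlator η F W h (k - 1) α := by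
  simp only [correlator]
  rw [← iterPderiv_stringField, hF.stringField_onePoint hη hh, map_neg]

theorem StringEqHyp.insertString_pairing (hF : StringEqHyp N η F g) (hη : ∀ α β, η α β = η β α)
    (m : ℤ) (W V : List (ℕ × Fin N)) :
    insertString W (fun L => pairing ηinv g (m + 1) (correlator η F L) (correlator η F V)) =
      pairing ηinv g m (correlator η F W) (correlator η F V) :=
  calc
    _ = pairing ηinv g (m + 1) (fun h k α => insertString W fun L => correlator η F L h k α)
        (correlator η F V) :=
      (insertString_tsum W fun L =>
        (coeffsVanishAlong_pairingTerm_correlator (m + 1) L V).summable).trans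
        (tsum_congr fun k => map_pairingTerm ηinv g (m + 1) (insertString W) _ _ k)
    _ = pairing ηinv g (m + 1) (fun h k α => -correlator η F W h (k - 1) α) (correlator η F V) :=
      pairing_congr_left ηinv (m + 1) _ fun _ hh => funext fun k => funext fun α =>
        hF.insertString_correlator hη hh W k α
    _ = _ := pairing_shift ηinv g m _ _

/-- The sum `∑ ∂_W(t̃_n^α) G_{n,α}`, whose three cases `|W| = 0`, `|W| = 1`, `|W| ≥ 2` are those of
the edge terms of `Ψ`. -/
noncomputable def ttildeSum (W : List (ℕ × Fin N)) (G : ℕ × Fin N → R N) : R N :=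
  ∑' p, iterPderiv ℚ W (ttilde N p.1 p.2) * G p

theorem ttildeSum_nil (G : ℕ × Fin N → R N) :
    ttildeSum [] G = seriesSum N fun p => ttilde N p.1 p.2 * G p :=
  ((coeffsVanishAlong_ttilde (N := N)).mul_right G).seriesSum_eq_tsum.symm

theorem ttildeSum_singleton (w : ℕ × Fin N) (G : ℕ × Fin N → R N) : ttildeSum [w] G = G w := by
  simp only [ttildeSum, iterPderiv_cons, iterPderiv_nil, pderiv_ttilde, ite_mul, one_mul, zero_mul]
  exact tsum_ite_eq w G

theorem ttildeSum_cons_cons (v w : ℕ × Fin N) (W : List (ℕ × Fin N)) (G : ℕ × Fin N → R N) :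
    ttildeSum (v :: w :: W) G = 0 := by
  have hzero (p : ℕ × Fin N) : iterPderiv ℚ (v :: w :: W) (ttilde N p.1 p.2) = 0 := by
    rw [← iterPderiv_pderiv, ← iterPderiv_pderiv, pderiv_ttilde]
    split_ifs <;> simp
  simp [ttildeSum, hzero]

theorem pairingTerm_correlator_negSucc (hη : ∀ α β, η α β = η β α) (hinv : η * ηinv = 1)
    (W V : List (ℕ × Fin N)) (n : ℕ) :
    pairingTerm ηinv g m (correlator η F W) (correlator η F V) (Int.negSucc n) =
      -∑ α, iterPderiv ℚ W (ttilde N n α) * iterPderiv ℚ ((n + m + 1, α) :: V) (F g) := by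
  have hlevel : (m : ℤ) - Int.negSucc n = (n + m + 1 : ℕ) := by grind
  have hsign (c : ℚ) (x y : R N) :
      ((-1 : ℚ) ^ Int.negSucc n * c) • (((-1 : ℚ) ^ n • x) * y) = -(c • (x * y)) := by
    have hpow : (-1 : ℚ) ^ Int.negSucc n * c * (-1) ^ n = -c := by
      rw [zpow_negSucc, pow_succ]
      field_simp
    rw [smul_mul_assoc, smul_smul, hpow, neg_smul]
  have hgenus (x : ℕ × ℕ) (hx : x ∈ antidiagonal g) (hne : x ≠ (0, g)) : x.1 ≠ 0 := by
    rw [Finset.HasAntidiagonal.mem_antidiagonal] at hx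
    exact fun h => hne (Prod.ext h (by simpa [h] using hx))
  rw [pairingTerm, Finset.sum_eq_single (0, g)]
  · simp only [hlevel, correlator_natCast, correlator_negSucc, if_true, hsign,
      Finset.sum_neg_distrib]
    exact congrArg _ (sum_contract hη hinv _ _)
  · intro x hx hne
    simp [correlator_negSucc, hgenus x hx hne]
  · simp

theorem tsum_pairingTerm_correlator_negSucc (hη : ∀ α β, η α β = η β α) (hinv : η * ηinv = 1)
    (W V : List (ℕ × Fin N)) :
    ∑' n, pairingTerm ηinv g m (correlator η F W) (correlator η F V) (Int.negSucc n) =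
      -ttildeSum W fun p => iterPderiv ℚ ((p.1 + m + 1, p.2) :: V) (F g) := by
  have hsum := (((coeffsVanishAlong_ttilde (N := N)).iterPderiv W).mul_right fun p =>
    iterPderiv ℚ ((p.1 + m + 1, p.2) :: V) (F g)).summable
  simp only [pairingTerm_correlator_negSucc hη hinv, tsum_neg]
  rw [ttildeSum, hsum.tsum_prod' fun n => Summable.of_finite]
  simp only [tsum_fintype]

theorem pairing_correlator (hη : ∀ α β, η α β = η β α) (hinv : η * ηinv = 1)
    (W V : List (ℕ × Fin N)) :
    pairing ηinv g m (correlator η F W) (correlator η F V) =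
      ∑ k ∈ Finset.range (m + 1),
          pairingTerm ηinv g m (correlator η F W) (correlator η F V) k -
        ttildeSum W (fun p => iterPderiv ℚ ((p.1 + m + 1, p.2) :: V) (F g)) +
        (-1) ^ (m + 1) * ttildeSum V fun p => iterPderiv ℚ ((p.1 + m + 1, p.2) :: W) (F g) := by
  have hvanish := coeffsVanishAlong_pairingTerm_correlator (η := η) (ηinv := ηinv) (F := F)
    (g := g) m W V
  have hreflect (n : ℕ) :
      pairingTerm ηinv g m (correlator η F W) (correlator η F V) ((m + 1 : ℕ) + n) =
        (-1 : ℚ) ^ m • pairingTerm ηinv g m (correlator η F V) (correlator η F W)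
          (Int.negSucc n) := by
    have hlevel : ((m + 1 : ℕ) + n : ℤ) = m - Int.negSucc n := by grind
    rw [hlevel, pairingTerm_reflect g m (inverse_symm hη hinv), zpow_natCast]
  rw [pairing, tsum_int_eq_sum_range_add
    (hvanish.comp_tendsto Nat.cast_injective.tendsto_cofinite).summable
    (hvanish.comp_tendsto (φ := Int.negSucc)
      (Function.Injective.tendsto_cofinite fun _ _ => Int.negSucc.inj)).summable (m + 1)]
  simp only [hreflect]
  rw [tsum_const_smul'', tsum_pairingTerm_correlator_negSucc hη hinv,
    tsum_pairingTerm_correlator_negSucc hη hinv]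
  have hsmul (x : R N) : (-1 : ℚ) ^ m • -x = (-1) ^ (m + 1) * x := by
    rcases Nat.even_or_odd m with h | h <;> simp [h.neg_one_pow, pow_succ]
  rw [hsmul]
  ring

theorem sum_range_pairingTerm_correlator (W V : List (ℕ × Fin N)) :
    ∑ k ∈ Finset.range (m + 1), pairingTerm ηinv g m (correlator η F W) (correlator η F V) k =
      ∑ k ∈ Finset.range (m + 1), ∑ g₁ ∈ Finset.range (g + 1), ∑ α, ∑ β,
        (-1 : R N) ^ k * MvPowerSeries.C (σ := ℕ × Fin N) (R := ℚ) (ηinv α β) *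
          Bracket N F g₁ ((k, α) :: coordList N W) *
          Bracket N F (g - g₁) (((m - k : ℕ), β) :: coordList N V) := by
  have hbracket (h n : ℕ) (α : Fin N) (L : List (ℕ × Fin N)) :
      Bracket N F h ((n, α) :: coordList N L) = correlator η F L h n α :=
    (bracket_coordList F h ((n, α) :: L)).trans (correlator_natCast L h n α).symm
  refine Finset.sum_congr rfl fun k hk => ?_
  have hkm : (m : ℤ) - k = (m - k : ℕ) := by grind
  rw [pairingTerm, Finset.Nat.sum_antidiagonal_eq_sum_range_succ_mk]
  refine Finset.sum_congr rfl fun g₁ _ => Finset.sum_congr rfl fun α _ =>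
    Finset.sum_congr rfl fun β _ => ?_
  rw [hbracket, hbracket, hkm, MvPowerSeries.smul_eq_C_mul, zpow_natCast]
  simp [mul_assoc]

theorem psi_coordList (hη : ∀ α β, η α β = η β α) (hinv : η * ηinv = 1)
    (W V : List (ℕ × Fin N)) :
    Psi N ηinv F g m (coordList N W) (coordList N V) =
      pairing ηinv g m (correlator η F W) (correlator η F V) := by
  have hshift (n : ℕ) (α : Fin N) (L : List (ℕ × Fin N)) :
      Bracket N F g (((n : ℤ) + m + 1, α) :: coordList N L) =
        iterPderiv ℚ ((n + m + 1, α) :: L) (F g) := by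
    rw [← bracket_coordList]
    simp [coordList]
  have hshift' (n : ℕ) (α : Fin N) (L : List (ℕ × Fin N)) :
      Bracket N F g (coordList N L ++ [((n : ℤ) + m + 1, α)]) =
        iterPderiv ℚ ((n + m + 1, α) :: L) (F g) := by
    rw [← iterPderiv_append_singleton, ← bracket_coordList]
    simp [coordList]
  rw [pairing_correlator hη hinv]
  unfold Psi
  refine congrArg₂ (· + ·) (congrArg₂ (· - ·) (sum_range_pairingTerm_correlator W V).symm ?_)
    (congrArg (_ * ·) ?_)
  · obtain _ | ⟨w, _ | ⟨w', W⟩⟩ := W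
    · rw [ttildeSum_nil]
      exact congrArg (seriesSum N) (funext fun p => congrArg _ (hshift _ _ _))
    · rw [ttildeSum_singleton]
      exact hshift _ _ _
    · exact (ttildeSum_cons_cons w w' W _).symm
  · obtain _ | ⟨v, _ | ⟨v', V⟩⟩ := V
    · rw [ttildeSum_nil]
      exact congrArg (seriesSum N) (funext fun p => congrArg _ (hshift _ _ _))
    · rw [ttildeSum_singleton]
      exact hshift' _ _ _
    · exact (ttildeSum_cons_cons v v' V _).symm

end PsiAsPairing

section Reduction

variable {N : ℕ} [NeZero N] {η ηinv : Matrix (Fin N) (Fin N) ℚ} {F : ℕ → R N} {g : ℕ}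

theorem StringEqHyp.insertString_psi (hF : StringEqHyp N η F g) (hη : ∀ α β, η α β = η β α)
    (hinv : η * ηinv = 1) (m : ℕ) (W V : List (ℕ × Fin N)) :
    insertString W (fun L => Psi N ηinv F g (m + 1) (coordList N L) (coordList N V)) =
      Psi N ηinv F g m (coordList N W) (coordList N V) := by
  simp only [psi_coordList hη hinv, Nat.cast_add_one]
  exact hF.insertString_pairing hη m W V

variable (ηinv F g) in
/-- `Ψ_{r,s,g,m}` vanishes on all coordinate entries as soon as `m ≥ c + r + s`. -/
def PsiVanishes (c : ℤ) (r s : ℕ) : Prop :=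
  ∀ m : ℕ, c + r + s ≤ m → ∀ W V : List (ℕ × Fin N), W.length = r → V.length = s →
    Psi N ηinv F g m (coordList N W) (coordList N V) = 0

variable {c : ℤ} {r s : ℕ}

theorem PsiVanishes.symm (hη : ∀ α β, η α β = η β α) (hinv : η * ηinv = 1)
    (h : PsiVanishes ηinv F g c r s) : PsiVanishes ηinv F g c s r := by
  intro m hm W V hW hV
  rw [psi_coordList hη hinv, pairing_symm g m (inverse_symm hη hinv), ← psi_coordList hη hinv,
    h m (by omega) V W hV hW, smul_zero]

theorem PsiVanishes.of_succ (hη : ∀ α β, η α β = η β α) (hinv : η * ηinv = 1)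
    (hF : StringEqHyp N η F g) (h : PsiVanishes ηinv F g c (r + 1) s) :
    PsiVanishes ηinv F g c r s := by
  intro m hm W V hW hV
  induction hlevel : (W.map Prod.fst).sum using Nat.strong_induction_on generalizing m W with
  | _ d ih =>
    subst hlevel
    rw [← hF.insertString_psi hη hinv]
    exact insertString_eq_zero W
      (fun L hL => h (m + 1) (by push_cast; omega) L V (by omega) hV)
      fun L hL hlt => ih _ hlt (m + 1) (by push_cast; omega) L (by omega) rfl

theorem PsiVanishes.mono_left (hη : ∀ α β, η α β = η β α) (hinv : η * ηinv = 1)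
    (hF : StringEqHyp N η F g) {rhat : ℕ} (hr : r ≤ rhat) (h : PsiVanishes ηinv F g c rhat s) :
    PsiVanishes ηinv F g c r s := by
  induction hr with
  | refl => exact h
  | step _ ih => exact ih (h.of_succ hη hinv hF)

theorem psi_vanishing_reduce_general (hη : ∀ α β, η α β = η β α) (hinv : η * ηinv = 1)
    (hF : StringEqHyp N η F g) {rhat shat : ℕ} (hr : r ≤ rhat) (hs : s ≤ shat)
    (h : PsiVanishes ηinv F g c rhat shat) : PsiVanishes ηinv F g c r s :=
  (((h.mono_left hη hinv hF hr).symm hη hinv).mono_left hη hinv hF hs).symm hη hinv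

end Reduction

/-- If `Ψ_{r̂,ŝ,g,m} = 0` for all `m ≥ 2g−3+r̂+ŝ` and all coordinate entries,
then `Ψ_{r,s,g,m} = 0` for all `r ≤ r̂`, `s ≤ ŝ`, `m ≥ 2g−3+r+s` and all
coordinate entries. -/
theorem psi_vanishing_reduce (N : ℕ) [NeZero N]
    (η ηinv : Matrix (Fin N) (Fin N) ℚ)
    (hηsymm : ∀ α β, η α β = η β α)
    (hinv : η * ηinv = 1) (hinv' : ηinv * η = 1)
    (g : ℕ) (F : ℕ → R N) (hstring : StringEqHyp N η F g)
    (rhat shat : ℕ)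
    (H : ∀ m : ℕ, 2 * (g : ℤ) - 3 + (rhat : ℤ) + (shat : ℤ) ≤ (m : ℤ) →
      ∀ Ws Vs : List (ℕ × Fin N), Ws.length = rhat → Vs.length = shat →
        Psi N ηinv F g m (coordList N Ws) (coordList N Vs) = 0)
    (r s : ℕ) (hr : r ≤ rhat) (hs : s ≤ shat)
    (m : ℕ) (hm : 2 * (g : ℤ) - 3 + (r : ℤ) + (s : ℤ) ≤ (m : ℤ))
    (Ws Vs : List (ℕ × Fin N)) (hWs : Ws.length = r) (hVs : Vs.length = s) :
    Psi N ηinv F g m (coordList N Ws) (coordList N Vs) = 0 :=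
  psi_vanishing_reduce_general hηsymm hinv hstring hr hs H m hm Ws Vs hWs hVs

end GWBigPhase
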